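/- arXiv:2010.14686 — 3 statements merged into one kernel-verified Lean document; each statement's English description precedes it below -/
import Mathlib

section
/- The entropy map X ↦ h_top(X), defined on the set of nonempty shift spaces over the alphabet A equipped with the metric d(X,Y) = 2^{−min{n : L(X,n) ≠ L(Y,n)}}, is continuous at a shift space X₀ if and only if h_top(X₀) = 0. -/
open Filter MeasureTheory Topology
open scoped BigOperators ENNReal

noncomputable section

namespace PaperStmt

/-- The full two-sided shift: bi-infinite sequences over the alphabet `Fin d`. -/
abbrev FullShift (d : ℕ) := ℤ → Fin d

/-- The (left) shift map `f(x)_k = x_{k+1}`. -/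
def shift (d : ℕ) : FullShift d → FullShift d := fun x k => x (k + 1)

/-- A (two-sided) shift space: a nonempty closed shift-invariant subset. -/
def IsShiftSpace {d : ℕ} (X : Set (FullShift d)) : Prop :=
  X.Nonempty ∧ IsClosed X ∧ shift d '' X = X

/-- The cylinder at position `0` determined by a word `w` of length `n`. -/
def cyl {d n : ℕ} (w : Fin n → Fin d) : Set (FullShift d) :=
  {x | ∀ i : Fin n, x ((i : ℕ) : ℤ) = w i}

/-- The language of `X` in length `n`: words of length `n` occurring in elements of `X`
(at position `0`; for shift-invariant `X` this is occurrence anywhere). -/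
def langSet {d : ℕ} (X : Set (FullShift d)) (n : ℕ) : Set (Fin n → Fin d) :=
  {w | (X ∩ cyl w).Nonempty}

/-- Birkhoff sum `S_n φ`. -/
def birkhoff {d : ℕ} (φ : FullShift d → ℝ) (n : ℕ) (x : FullShift d) : ℝ :=
  ∑ k ∈ Finset.range n, φ ((shift d)^[k] x)

open Classical in
/-- The `n`-th partition function `Z_n(φ)` of `X`. -/
def Zfun {d : ℕ} (X : Set (FullShift d)) (φ : FullShift d → ℝ) (n : ℕ) : ℝ :=
  ∑ w : Fin n → Fin d,
    if (X ∩ cyl w).Nonempty then Real.exp (sSup (birkhoff φ n '' (X ∩ cyl w))) else 0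

/-- Topological pressure `P_top(X,φ) = lim (1/n) log Z_n(φ) = inf_n (1/n) log Z_n(φ)`. -/
def pressure {d : ℕ} (X : Set (FullShift d)) (φ : FullShift d → ℝ) : ℝ :=
  ⨅ n : ℕ, (1 / (n + 1 : ℝ)) * Real.log (Zfun X φ (n + 1))

/-- Topological entropy `h_top(X) = inf_n (1/n) log |L(X,n)|`. -/
def entTop {d : ℕ} (X : Set (FullShift d)) : ℝ :=
  ⨅ n : ℕ, (1 / (n + 1 : ℝ)) * Real.log ((langSet X (n + 1)).ncard : ℝ)

/-- The shift-invariant Borel probability measures giving `X` full measure. -/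
def InvProb {d : ℕ} (X : Set (FullShift d)) : Set (Measure (FullShift d)) :=
  {μ | IsProbabilityMeasure μ ∧ μ.map (shift d) = μ ∧ μ X = 1}

/-- Measure-theoretic (Kolmogorov–Sinai) entropy of an invariant measure,
computed via cylinder sets: `h_μ = lim -(1/n) Σ_{|w|=n} μ[w] log μ[w]`. -/
def mEnt {d : ℕ} (μ : Measure (FullShift d)) : ℝ :=
  Filter.liminf
    (fun n : ℕ => (1 / (n + 1 : ℝ)) *
      ∑ w : Fin (n + 1) → Fin d, Real.negMulLog (μ (cyl w)).toReal)
    Filter.atTop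

/-- The free energy `h_μ(f) + ∫ φ dμ` of an invariant measure. -/
def freeEnergy {d : ℕ} (μ : Measure (FullShift d)) (φ : FullShift d → ℝ) : ℝ :=
  mEnt μ + ∫ x, φ x ∂μ

/-- `sup { ∫ φ dμ : μ ∈ M_X }`. -/
def intAvg {d : ℕ} (X : Set (FullShift d)) (φ : FullShift d → ℝ) : ℝ :=
  sSup {r | ∃ μ ∈ InvProb X, r = ∫ x, φ x ∂μ}

/-- `μ` is an equilibrium state of `φ` on `X`. -/
def IsEqState {d : ℕ} (X : Set (FullShift d)) (φ : FullShift d → ℝ)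
    (μ : Measure (FullShift d)) : Prop :=
  μ ∈ InvProb X ∧ freeEnergy μ φ = pressure X φ

/-- `p : ℤ → ℤ` parses `x` into consecutive generator blocks from `𝒢`:
the block of `x` from `p j` to `p (j+1) - 1` is a generator, for every `j`. -/
def IsParsing {d : ℕ} (𝒢 : Set (List (Fin d))) (x : FullShift d) (p : ℤ → ℤ) : Prop :=
  StrictMono p ∧ ∀ j : ℤ, ∃ g ∈ 𝒢,
    p (j + 1) = p j + g.length ∧ ∀ (l : ℕ) (hl : l < g.length), x (p j + l) = g[l]

/-- `X_seq`: the set of bi-infinite concatenations of generators. -/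
def Xseq {d : ℕ} (𝒢 : Set (List (Fin d))) : Set (FullShift d) :=
  {x | ∃ p : ℤ → ℤ, IsParsing 𝒢 x p}

/-- The coded shift generated by `𝒢`: the closure of `X_seq`. -/
def codedShift {d : ℕ} (𝒢 : Set (List (Fin d))) : Set (FullShift d) :=
  closure (Xseq 𝒢)

/-- `𝒢` is a unique representation: every `x ∈ X_seq` admits exactly one parsing
into generator blocks (i.e. the set of cut points is uniquely determined). -/
def UniqueRep {d : ℕ} (𝒢 : Set (List (Fin d))) : Prop :=
  ∀ (x : FullShift d) (p q : ℤ → ℤ),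
    IsParsing 𝒢 x p → IsParsing 𝒢 x q → Set.range p = Set.range q

/-- `P_seq(φ) = sup { h_μ + ∫φ dμ : μ ∈ M_X, μ(Xs) = 1 }`. -/
def PseqOf {d : ℕ} (X Xs : Set (FullShift d)) (φ : FullShift d → ℝ) : ℝ :=
  sSup {r | ∃ μ ∈ InvProb X, μ Xs = 1 ∧ r = freeEnergy μ φ}

/-- `P_lim(φ) = sup { h_μ + ∫φ dμ : μ ∈ M_X, μ(X \ Xs) = 1 }`. -/
def PlimOf {d : ℕ} (X Xs : Set (FullShift d)) (φ : FullShift d → ℝ) : ℝ :=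
  sSup {r | ∃ μ ∈ InvProb X, μ (X \ Xs) = 1 ∧ r = freeEnergy μ φ}

/-- `φ` has strict full sequential pressure: `P_seq(φ) > P_lim(φ)`. -/
def StrictFSP {d : ℕ} (X Xs : Set (FullShift d)) (φ : FullShift d → ℝ) : Prop :=
  PlimOf X Xs φ < PseqOf X Xs φ

/-- `φ ∈ FSSP(X)`: `φ` lies in the sup-norm closure (within `C(X,ℝ)`) of the
set of continuous potentials with strict full sequential pressure. -/
def InFSSP {d : ℕ} (X Xs : Set (FullShift d)) (φ : FullShift d → ℝ) : Prop :=
  ∀ ε : ℝ, 0 < ε → ∃ ψ : FullShift d → ℝ, ContinuousOn ψ X ∧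
    (∀ x ∈ X, |φ x - ψ x| ≤ ε) ∧ StrictFSP X Xs ψ

/-- The invariant probability measure equidistributed on the (period-`ℓ`) orbit of `y`. -/
def periodicMeasure {d : ℕ} (y : FullShift d) (ℓ : ℕ) : Measure (FullShift d) :=
  (ℓ : ℝ≥0∞)⁻¹ • ∑ k ∈ Finset.range ℓ, Measure.dirac ((shift d)^[k] y)

/-- `y` is periodic with period `ℓ ≥ 1`. -/
def IsPeriodicOf {d : ℕ} (y : FullShift d) (ℓ : ℕ) : Prop :=
  1 ≤ ℓ ∧ (shift d)^[ℓ] y = y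

/-!
Entropy is an infimum of quantities each of which depends on the words of a single length, so it is
upper semicontinuous, and hence continuous wherever it vanishes. Conversely, fix `N` and a shift
space `X₀`, and consider the Rauzy graph whose vertices are the words of length `N + 1` of `X₀`.
Every vertex has a successor and a predecessor; choose one of each. Through each vertex there is
then one bi-infinite path following the chosen successors into the future and the chosen
predecessors into the past. The sequences read off along these finitely many paths have exactly the
words of `X₀` up to length `N + 1`. A window of such a sequence is determined by a vertex and by the
position in the window at which the path turns from predecessors to successors, so there are only
linearly many windows of each length. Thus spaces of zero entropy lie arbitrarily close to `X₀`.
-/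

section Windows

variable {α : Type*}

/-- The word of length `n` that the bi-infinite sequence `x` carries from position `k` onwards. -/
def window (x : ℤ → α) (k : ℤ) (n : ℕ) : Fin n → α := fun i => x (k + (i : ℕ))

/-- The edge relation `v → v'` of the Rauzy graph on words of length `N + 1`: deleting the first
letter of `v` and deleting the last letter of `v'` leave the same word. -/
def RauzyAdj {N : ℕ} (v v' : Fin (N + 1) → α) : Prop := Fin.tail v = Fin.init v'

lemma window_heads_of_rauzyAdj {N : ℕ} {u : ℤ → Fin (N + 1) → α}
    (hu : ∀ k, RauzyAdj (u k) (u (k + 1))) (k : ℤ) :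
    window (fun j => u j 0) k (N + 1) = u k := by
  funext i
  induction i using Fin.induction generalizing k with
  | zero => simp [window]
  | succ i ih =>
    calc u (k + (i.succ : ℕ)) 0 = u (k + 1 + (i.castSucc : ℕ)) 0 := by
          rw [Fin.val_succ, Fin.val_castSucc]; congr 1; push_cast; ring
      _ = u (k + 1) i.castSucc := ih (k + 1)
      _ = u k i.succ := (congrFun (hu k) i).symm

end Windows

section BiPath

variable {T : Type*} (next prev : T → T)

/-- The bi-infinite path that is at `t` at time `0`, follows `next` into the future and `prev` into
the past. -/
def biPath (t : T) : ℤ → T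
  | .ofNat m => next^[m] t
  | .negSucc m => prev^[m + 1] t

lemma biPath_natCast (t : T) (m : ℕ) : biPath next prev t m = next^[m] t := rfl

lemma biPath_neg_natCast (t : T) (m : ℕ) : biPath next prev t (-m) = prev^[m] t := by
  cases m <;> rfl

lemma biPath_rel {next prev : T → T} {R : T → T → Prop} (hnext : ∀ t, R t (next t))
    (hprev : ∀ t, R (prev t) t) (t : T) :
    ∀ k : ℤ, R (biPath next prev t k) (biPath next prev t (k + 1))
  | .ofNat m => by
    change R (next^[m] t) (next^[m + 1] t)
    exact Function.iterate_succ_apply' next m t ▸ hnext _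
  | .negSucc 0 => hprev t
  | .negSucc (m + 1) => by
    change R (prev^[m + 2] t) (prev^[m + 1] t)
    exact Function.iterate_succ_apply' prev (m + 1) t ▸ hprev _

lemma biPath_add_of_nonneg (t : T) {k l : ℤ} (hk : 0 ≤ k) (hl : 0 ≤ l) :
    biPath next prev t (k + l) = biPath next prev (biPath next prev t k) l := by
  lift k to ℕ using hk
  lift l to ℕ using hl
  rw [← Nat.cast_add, add_comm k l]
  simp only [biPath_natCast, Function.iterate_add_apply]

lemma biPath_add_of_nonpos (t : T) {k l : ℤ} (hk : k ≤ 0) (hl : l ≤ 0) :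
    biPath next prev t (k + l) = biPath next prev (biPath next prev t k) l := by
  obtain ⟨k, rfl⟩ := Int.exists_eq_neg_ofNat hk
  obtain ⟨l, rfl⟩ := Int.exists_eq_neg_ofNat hl
  rw [← neg_add, ← Nat.cast_add, add_comm k l]
  simp only [biPath_neg_natCast, Function.iterate_add_apply]

lemma exists_window_biPath_eq_window_neg (t : T) (k : ℤ) (n : ℕ) :
    ∃ (s : T) (p : Fin (n + 1)),
      window (biPath next prev t) k (n + 1) = window (biPath next prev s) (-(p : ℕ)) (n + 1) := by
  rcases le_total 0 k with hk | hk
  · refine ⟨biPath next prev t k, 0, funext fun i => ?_⟩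
    simpa [window] using biPath_add_of_nonneg next prev t hk (Int.natCast_nonneg i)
  rcases le_total (-k) n with hkn | hkn
  · exact ⟨t, ⟨(-k).toNat, by omega⟩, by simp [hk]⟩
  · refine ⟨biPath next prev t (k + n), Fin.last n, funext fun i => ?_⟩
    have hi : (i : ℤ) - n ≤ 0 := by omega
    have h := biPath_add_of_nonpos next prev t (show k + n ≤ 0 by omega) hi
    rw [show k + n + ((i : ℤ) - n) = k + i by ring, show (i : ℤ) - n = -n + i by ring] at h
    exact h

lemma ncard_range_window_biPath_le [Finite T] {α : Type*} (label : T → α) (n : ℕ) :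
    (Set.range fun q : T × ℤ => window (label ∘ biPath next prev q.1) q.2 (n + 1)).ncard ≤
      Nat.card T * (n + 1) := by
  let centred (q : T × Fin (n + 1)) : Fin (n + 1) → α :=
    window (label ∘ biPath next prev q.1) (-((q.2 : ℕ) : ℤ)) (n + 1)
  have hsub : (Set.range fun q : T × ℤ => window (label ∘ biPath next prev q.1) q.2 (n + 1)) ⊆
      Set.range centred := by
    rintro _ ⟨⟨t, k⟩, rfl⟩
    obtain ⟨s, p, h⟩ := exists_window_biPath_eq_window_neg next prev t k n
    exact ⟨(s, p), congrArg (label ∘ ·) h.symm⟩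
  calc _ ≤ (Set.range centred).ncard := Set.ncard_le_ncard hsub (Set.finite_range centred)
    _ ≤ Nat.card (T × Fin (n + 1)) := Finite.card_range_le centred
    _ = Nat.card T * (n + 1) := by rw [Nat.card_prod, Nat.card_fin]

end BiPath

section Language

variable {d : ℕ}

lemma langSet_eq_image_window (X : Set (FullShift d)) (n : ℕ) :
    langSet X n = (fun x => window x 0 n) '' X := by
  ext w
  simp [langSet, cyl, Set.Nonempty, window, funext_iff]

lemma mem_langSet {X : Set (FullShift d)} {n : ℕ} {w : Fin n → Fin d} :
    w ∈ langSet X n ↔ ∃ x ∈ X, window x 0 n = w := by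
  rw [langSet_eq_image_window, Set.mem_image]

lemma isOpen_cyl {n : ℕ} (w : Fin n → Fin d) : IsOpen (cyl w) := by
  have hcyl : cyl w = ⋂ i : Fin n, (fun x : FullShift d => x ((i : ℕ) : ℤ)) ⁻¹' {w i} := by
    ext x
    simp [cyl]
  rw [hcyl]
  exact isOpen_iInter_of_finite fun i => (isOpen_discrete _).preimage (continuous_apply _)

lemma langSet_closure (X : Set (FullShift d)) (n : ℕ) : langSet (closure X) n = langSet X n :=
  Set.ext fun w => closure_inter_open_nonempty_iff (isOpen_cyl w)

lemma langSet_eq_image_take (X : Set (FullShift d)) {m n : ℕ} (h : m ≤ n) :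
    langSet X m = Fin.take m h '' langSet X n := by
  simp only [langSet_eq_image_window, Set.image_image]
  rfl

lemma langSet_eq_of_le {X Y : Set (FullShift d)} {m n : ℕ} (h : m ≤ n)
    (hXY : langSet X n = langSet Y n) : langSet X m = langSet Y m := by
  rw [langSet_eq_image_take X h, hXY, ← langSet_eq_image_take Y h]

lemma rauzyAdj_window_shift (x : FullShift d) (k : ℤ) (N : ℕ) :
    RauzyAdj (window x k (N + 1)) (window (shift d x) k (N + 1)) := by
  funext i
  simp [Fin.tail, Fin.init, window, shift, add_assoc]

lemma exists_rauzyAdj_right {X : Set (FullShift d)} (hX : shift d '' X ⊆ X) {N : ℕ}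
    (v : langSet X (N + 1)) : ∃ v' : langSet X (N + 1), RauzyAdj v.1 v'.1 := by
  obtain ⟨v, hv⟩ := v
  obtain ⟨x, hx, rfl⟩ := mem_langSet.1 hv
  have hshift : shift d x ∈ X := hX (Set.mem_image_of_mem _ hx)
  exact ⟨⟨_, mem_langSet.2 ⟨_, hshift, rfl⟩⟩, rauzyAdj_window_shift x 0 N⟩

lemma exists_rauzyAdj_left {X : Set (FullShift d)} (hX : X ⊆ shift d '' X) {N : ℕ}
    (v : langSet X (N + 1)) : ∃ v' : langSet X (N + 1), RauzyAdj v'.1 v.1 := by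
  obtain ⟨v, hv⟩ := v
  obtain ⟨x, hx, rfl⟩ := mem_langSet.1 hv
  obtain ⟨y, hy, rfl⟩ := hX hx
  exact ⟨⟨_, mem_langSet.2 ⟨y, hy, rfl⟩⟩, rauzyAdj_window_shift y 0 N⟩

end Language

section Entropy

variable {d : ℕ}

lemma log_ncard_langSet_div_nonneg (X : Set (FullShift d)) (n : ℕ) :
    0 ≤ (1 / (n + 1 : ℝ)) * Real.log ((langSet X (n + 1)).ncard : ℝ) :=
  mul_nonneg (by positivity) (Real.log_natCast_nonneg _)

lemma entTop_nonneg (X : Set (FullShift d)) : 0 ≤ entTop X :=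
  Real.iInf_nonneg (log_ncard_langSet_div_nonneg X)

lemma entTop_le (X : Set (FullShift d)) (n : ℕ) :
    entTop X ≤ (1 / (n + 1 : ℝ)) * Real.log ((langSet X (n + 1)).ncard : ℝ) :=
  ciInf_le ⟨0, Set.forall_mem_range.2 (log_ncard_langSet_div_nonneg X)⟩ n

lemma entTop_closure (X : Set (FullShift d)) : entTop (closure X) = entTop X := by
  simp only [entTop, langSet_closure]

lemma exists_forall_langSet_eq_entTop_lt {X₀ : Set (FullShift d)} {a : ℝ} (ha : entTop X₀ < a) :
    ∃ N : ℕ, ∀ X : Set (FullShift d), langSet X N = langSet X₀ N → entTop X < a := by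
  obtain ⟨n, hn⟩ := exists_lt_of_ciInf_lt ha
  exact ⟨n + 1, fun X hX => (entTop_le X n).trans_lt (hX ▸ hn)⟩

lemma log_natCast_le_of_le_mul_pow {a c m p : ℕ} (h : a ≤ c * m ^ p) :
    Real.log a ≤ Real.log c + p * Real.log m := by
  rcases Nat.eq_zero_or_pos a with rfl | ha
  · simpa using add_nonneg (Real.log_natCast_nonneg c)
      (mul_nonneg p.cast_nonneg (Real.log_natCast_nonneg m))
  · obtain ⟨hc, hm⟩ : (c : ℝ) ≠ 0 ∧ (m : ℝ) ^ p ≠ 0 := by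
      exact_mod_cast mul_ne_zero_iff.1 (ha.trans_le h).ne'
    calc Real.log a ≤ Real.log (c * m ^ p) :=
          Real.log_le_log (by exact_mod_cast ha) (by exact_mod_cast h)
      _ = Real.log c + p * Real.log m := by rw [Real.log_mul hc hm, Real.log_pow]

lemma entTop_eq_zero_of_ncard_le_mul_pow {X : Set (FullShift d)} {c p : ℕ}
    (h : ∀ n : ℕ, (langSet X (n + 1)).ncard ≤ c * (n + 1) ^ p) : entTop X = 0 := by
  have hlog : Tendsto (fun n : ℕ => Real.log (n + 1 : ℝ) / (n + 1 : ℝ)) atTop (𝓝 0) :=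
    Real.isLittleO_log_id_atTop.tendsto_div_nhds_zero.comp
      (tendsto_atTop_add_const_right _ _ tendsto_natCast_atTop_atTop)
  have hlim : Tendsto (fun n : ℕ => (1 / (n + 1 : ℝ)) * Real.log c
      + p * (Real.log (n + 1 : ℝ) / (n + 1 : ℝ))) atTop (𝓝 0) := by
    simpa using (tendsto_one_div_add_atTop_nhds_zero_nat.mul_const (Real.log c)).add
      (hlog.const_mul (p : ℝ))
  refine le_antisymm (ge_of_tendsto' hlim fun n => ?_) (entTop_nonneg X)
  calc entTop X ≤ (1 / (n + 1 : ℝ)) * Real.log ((langSet X (n + 1)).ncard : ℝ) := entTop_le X n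
    _ ≤ (1 / (n + 1 : ℝ)) * (Real.log c + p * Real.log ((n + 1 : ℕ) : ℝ)) := by
      gcongr
      exact log_natCast_le_of_le_mul_pow (h n)
    _ = _ := by push_cast; ring

end Entropy

section Orbits

variable {d : ℕ} {ι : Type*}

lemma continuous_shift : Continuous (shift d) :=
  continuous_pi fun k => continuous_apply (k + 1)

lemma isShiftSpace_closure {Y : Set (FullShift d)} (hne : Y.Nonempty) (hY : shift d '' Y = Y) :
    IsShiftSpace (closure Y) := by
  refine ⟨hne.closure, isClosed_closure, ?_⟩
  rw [image_closure_of_isCompact isClosed_closure.isCompact continuous_shift.continuousOn, hY]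

/-- The union of the two-sided shift orbits of the points `x i`. -/
def orbits (x : ι → FullShift d) : Set (FullShift d) :=
  Set.range fun (q : ι × ℤ) (j : ℤ) => x q.1 (q.2 + j)

lemma shift_image_orbits (x : ι → FullShift d) : shift d '' orbits x = orbits x := by
  have hcomp : (shift d ∘ fun (q : ι × ℤ) (j : ℤ) => x q.1 (q.2 + j)) =
      (fun (q : ι × ℤ) (j : ℤ) => x q.1 (q.2 + j)) ∘
        (Equiv.refl ι).prodCongr (Equiv.addRight 1) := by
    funext q j
    simp [shift, add_assoc, add_comm (1 : ℤ)]
  rw [orbits, ← Set.range_comp, hcomp, EquivLike.range_comp]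

lemma langSet_orbits (x : ι → FullShift d) (n : ℕ) :
    langSet (orbits x) n = Set.range fun q : ι × ℤ => window (x q.1) q.2 n := by
  rw [langSet_eq_image_window, orbits, ← Set.range_comp]
  refine congrArg Set.range (funext fun q => funext fun i => ?_)
  simp only [Function.comp_apply, window, zero_add]

lemma entTop_orbits_biPath [Finite ι] (next prev : ι → ι) (label : ι → Fin d) :
    entTop (orbits fun t => label ∘ biPath next prev t) = 0 := by
  refine entTop_eq_zero_of_ncard_le_mul_pow (c := Nat.card ι) (p := 1) fun n => ?_
  rw [langSet_orbits, pow_one]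
  exact ncard_range_window_biPath_le next prev label n

lemma langSet_orbits_biPath {N : ℕ} {L : Set (Fin (N + 1) → Fin d)} {next prev : L → L}
    (hnext : ∀ v, RauzyAdj v.1 (next v).1) (hprev : ∀ v, RauzyAdj (prev v).1 v.1) :
    langSet (orbits fun v : L => (fun u : L => u.1 0) ∘ biPath next prev v) (N + 1) = L := by
  have hwindow (v : L) (k : ℤ) :
      window ((fun u : L => u.1 0) ∘ biPath next prev v) k (N + 1) = (biPath next prev v k).1 :=
    window_heads_of_rauzyAdj (u := fun k => (biPath next prev v k).1)
      (biPath_rel (R := fun v v' : L => RauzyAdj v.1 v'.1) hnext hprev v) k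
  simp only [langSet_orbits, hwindow]
  refine Set.Subset.antisymm ?_ fun v hv => ⟨(⟨v, hv⟩, 0), rfl⟩
  rintro _ ⟨q, rfl⟩
  exact (biPath next prev q.1 q.2).2

lemma exists_isShiftSpace_langSet_eq_entTop_eq_zero {X₀ : Set (FullShift d)} (hne : X₀.Nonempty)
    (hinv : shift d '' X₀ = X₀) (N : ℕ) :
    ∃ X : Set (FullShift d), IsShiftSpace X ∧
      (∀ j ≤ N, langSet X j = langSet X₀ j) ∧ entTop X = 0 := by
  choose next hnext using exists_rauzyAdj_right hinv.subset (N := N)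
  choose prev hprev using exists_rauzyAdj_left hinv.superset (N := N)
  set Y := orbits fun v : langSet X₀ (N + 1) => (fun u => u.1 0) ∘ biPath next prev v with hY
  have hlang : langSet Y (N + 1) = langSet X₀ (N + 1) := langSet_orbits_biPath hnext hprev
  have : Nonempty (langSet X₀ (N + 1)) :=
    (langSet_eq_image_window X₀ (N + 1) ▸ hne.image _).to_subtype
  refine ⟨closure Y, isShiftSpace_closure (Set.range_nonempty _) (shift_image_orbits _),
    fun j hj => ?_, ?_⟩
  · rw [langSet_closure, langSet_eq_of_le (hj.trans N.le_succ) hlang]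
  · rw [entTop_closure, hY, entTop_orbits_biPath]

end Orbits

/-- the entropy map `X ↦ h_top(X)` is continuous at a shift space `X₀`
(with respect to the metric `d(X,Y) = 2^{−min{n : L(X,n) ≠ L(Y,n)}}`) if and only if
`h_top(X₀) = 0`. -/
theorem statement6 {d : ℕ} (hd : 2 ≤ d) (X₀ : Set (FullShift d)) (hX₀ : IsShiftSpace X₀) :
    (∀ ε : ℝ, 0 < ε → ∃ N : ℕ, ∀ X : Set (FullShift d), IsShiftSpace X →
        (∀ j : ℕ, j ≤ N → langSet X j = langSet X₀ j) → |entTop X - entTop X₀| < ε) ↔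
      entTop X₀ = 0 := by
  constructor
  · intro hcont
    by_contra hne
    obtain ⟨N, hN⟩ := hcont (entTop X₀) ((entTop_nonneg X₀).lt_of_ne' hne)
    obtain ⟨X, hX, hlang, hzero⟩ :=
      exists_isShiftSpace_langSet_eq_entTop_eq_zero hX₀.1 hX₀.2.2 N
    have hlt : |entTop X - entTop X₀| < entTop X₀ := hN X hX hlang
    rw [hzero, zero_sub, abs_neg] at hlt
    exact (le_abs_self _).not_gt hlt
  · intro hzero ε hε
    obtain ⟨N, hN⟩ := exists_forall_langSet_eq_entTop_lt (hzero.trans_lt hε)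
    refine ⟨N, fun X _ hlang => ?_⟩
    rw [hzero, sub_zero, abs_of_nonneg (entTop_nonneg X)]
    exact hN X (hlang N le_rfl)

end PaperStmt
end
end

section
/- For every shift space X over the alphabet A and every n ∈ ℕ, there exists a shift space Z ⊆ Σ with L(Z,n) = L(X,n) such that the nonwandering set of Z is a finite union of periodic orbits; in particular h_top(Z) = 0. -/
open Filter MeasureTheory Topology
open scoped BigOperators ENNReal

noncomputable section

namespace PaperStmt

/-- The nonwandering set of the subshift `Z`. -/
def nonwanderingSet {d : ℕ} (Z : Set (FullShift d)) : Set (FullShift d) :=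
  {x | x ∈ Z ∧ ∀ U : Set (FullShift d), IsOpen U → x ∈ U →
    ∃ n : ℕ, 1 ≤ n ∧ ((shift d)^[n] '' (Z ∩ U) ∩ (Z ∩ U)).Nonempty}

/-!
Fix for every word of length `n` of `X` a point `x` of `X` containing it. Since there are only
finitely many words of length `n`, some word recurs in `x` far to the right and some word recurs
far to the left. Repeating forever the stretches between these recurrences turns `x` into a point
`z` which is asymptotic to one periodic point on the left and to another on the right, and no new
words of length `n` appear because one only ever jumps between occurrences of the same word. The
closure `Z` of the union of the finitely many orbits so obtained consists of these orbits and of the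
orbits of their periodic limits. All other points of `Z` are isolated, so the only nonwandering
points are the periodic ones, and the number of words of length `N` of `Z` grows linearly in `N`.
-/

section Orbits

variable {α : Type*}

/-- The `m`-th power of the shift on bi-infinite sequences, for an arbitrary integer `m`. -/
def translate (m : ℤ) (x : ℤ → α) : ℤ → α := fun k => x (k + m)

lemma translate_zero (x : ℤ → α) : translate 0 x = x :=
  funext fun k => congrArg x (add_zero k)

lemma translate_add (m n : ℤ) (x : ℤ → α) :
    translate (m + n) x = translate m (translate n x) :=
  funext fun k => congrArg x (add_assoc k m n).symm

lemma translate_eq_self_iff {m : ℤ} {x : ℤ → α} : translate m x = x ↔ Function.Periodic x m :=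
  funext_iff

/-- The two-sided shift orbit of a bi-infinite sequence. -/
def orbit (x : ℤ → α) : Set (ℤ → α) := Set.range fun m => translate m x

lemma self_mem_orbit (x : ℤ → α) : x ∈ orbit x := ⟨0, translate_zero x⟩

lemma periodic_translate {x : ℤ → α} {p : ℤ} (hx : Function.Periodic x p) :
    Function.Periodic (fun m => translate m x) p := fun m => by
  simp only [translate_add, translate_eq_self_iff.2 hx]

lemma finite_orbit_of_periodic {x : ℤ → α} {p : ℤ} (hp : 0 < p) (hx : Function.Periodic x p) :
    (orbit x).Finite := by
  rw [orbit, ← (periodic_translate hx).image_Ioc hp 0]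
  exact (Set.finite_Ioc _ _).image _

lemma periodic_of_periodic_translate {x : ℤ → α} {m p : ℤ}
    (h : Function.Periodic (translate m x) p) : Function.Periodic x p := by
  simpa only [translate, sub_add_cancel] using h.sub_const m

lemma eq_of_periodic_of_eventuallyEq {x y : ℤ → α} {p q : ℤ} (hp : 0 < p) (hq : 0 < q)
    (hx : Function.Periodic x p) (hy : Function.Periodic y q) (hxy : x =ᶠ[atTop] y) : x = y := by
  obtain ⟨N, hN⟩ := eventually_atTop.1 hxy
  have hpair : Function.Periodic (fun k => (x k, y k)) (q * p) := fun k =>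
    Prod.ext (hx.int_mul q k) (mul_comm p q ▸ hy.int_mul p k)
  funext k
  obtain ⟨j, hj, hkj⟩ := hpair.exists_mem_Ico (mul_pos hq hp) k N
  rw [Prod.mk.injEq] at hkj
  rw [hkj.1, hkj.2, hN j hj.1]

lemma tendsto_translate_nhdsSet_orbit [TopologicalSpace α] {z r : ℤ → α} {F : Filter ℤ}
    (hr : (orbit r).Finite) (hzr : ∀ k, ∀ᶠ m in F, z (k + m) = r (k + m)) :
    Tendsto (fun m => translate m z) F (𝓝ˢ (orbit r)) := by
  rw [tendsto_iff_ultrafilter]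
  intro G hG
  -- The finitely many values of `translate m r` partition `ℤ`, and `G` selects one of them.
  obtain ⟨y, hy, hry⟩ : ∃ y ∈ orbit r, ∀ᶠ m in (G : Filter ℤ), translate m r = y :=
    (Ultrafilter.eventually_exists_mem_iff hr).1 <|
      Eventually.of_forall fun m => ⟨_, ⟨m, rfl⟩, rfl⟩
  refine Tendsto.mono_right (tendsto_pi_nhds.2 fun k => ?_) (nhds_le_nhdsSet hy)
  refine tendsto_const_nhds.congr' ?_
  filter_upwards [hG (hzr k), hry] with m hm hmy
  rw [← hmy]
  exact hm.symm

end Orbits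

section CofiniteConvergence

variable {E ι : Type*} [TopologicalSpace E] [T3Space E] {K : Set E} {u : ι → E}

lemma eventually_mem_union_range_imp_eq (hK : IsClosed K) (hu : Tendsto u cofinite (𝓝ˢ K)) {x : E}
    (hx : x ∉ K) : ∀ᶠ y in 𝓝 x, y ∈ K ∪ Set.range u → y = x := by
  obtain ⟨U, hU, V, hV, hUV⟩ :=
    Filter.disjoint_iff.1 (disjoint_nhdsSet_nhds.2 (hK.closure_eq.symm ▸ hx))
  have hfin : ((u '' {i | u i ∉ U}) \ {x}).Finite := (Set.Finite.image u (hu hU)).sdiff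
  filter_upwards [hV, hfin.isClosed.isOpen_compl.mem_nhds fun h => h.2 rfl] with y hyV hy hyKu
  by_contra hne
  have hyU : y ∉ U := Set.disjoint_right.1 hUV hyV
  obtain hyK | ⟨i, rfl⟩ := hyKu
  · exact hyU (subset_of_mem_nhdsSet hU hyK)
  · exact hy ⟨⟨i, hyU, rfl⟩, hne⟩

lemma isClosed_union_range (hK : IsClosed K) (hu : Tendsto u cofinite (𝓝ˢ K)) :
    IsClosed (K ∪ Set.range u) := by
  rw [← isOpen_compl_iff, isOpen_iff_eventually]
  intro x hx
  filter_upwards [eventually_mem_union_range_imp_eq hK hu fun h => hx (Or.inl h)] with y hy hyKu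
  exact hx (hy hyKu ▸ hyKu)

end CofiniteConvergence

section Heteroclinic

variable {α : Type*}

/-- The point `z` is asymptotic to the periodic point `l` on the left and to the periodic point
`r` on the right. -/
structure IsHeteroclinic (z l r : ℤ → α) : Prop where
  eventuallyEq_atBot : z =ᶠ[atBot] l
  eventuallyEq_atTop : z =ᶠ[atTop] r
  periodic_left : ∃ p : ℤ, 0 < p ∧ Function.Periodic l p
  periodic_right : ∃ p : ℤ, 0 < p ∧ Function.Periodic r p

/-- The orbit closure of a point `z` which is heteroclinic from `l` to `r`, written out as the union
of three orbits. -/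
def heteroclinicSet (z l r : ℤ → α) : Set (ℤ → α) := orbit l ∪ orbit r ∪ orbit z

namespace IsHeteroclinic

variable {z l r : ℤ → α}

lemma finite_limits (h : IsHeteroclinic z l r) : (orbit l ∪ orbit r).Finite := by
  obtain ⟨p, hp, hl⟩ := h.periodic_left
  obtain ⟨q, hq, hr⟩ := h.periodic_right
  exact (finite_orbit_of_periodic hp hl).union (finite_orbit_of_periodic hq hr)

lemma tendsto_translate [TopologicalSpace α] (h : IsHeteroclinic z l r) :
    Tendsto (fun m => translate m z) cofinite (𝓝ˢ (orbit l ∪ orbit r)) := by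
  rw [Int.cofinite_eq, nhdsSet_union]
  refine Tendsto.sup_sup
    (tendsto_translate_nhdsSet_orbit (h.finite_limits.subset Set.subset_union_left) fun k => ?_)
    (tendsto_translate_nhdsSet_orbit (h.finite_limits.subset Set.subset_union_right) fun k => ?_)
  · exact (tendsto_atBot_add_const_left _ k tendsto_id).eventually h.eventuallyEq_atBot
  · exact (tendsto_atTop_add_const_left _ k tendsto_id).eventually h.eventuallyEq_atTop

lemma isClosed_heteroclinicSet [TopologicalSpace α] [T3Space α] (h : IsHeteroclinic z l r) :
    IsClosed (heteroclinicSet z l r) :=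
  isClosed_union_range h.finite_limits.isClosed h.tendsto_translate

lemma eventually_mem_heteroclinicSet_imp_eq [TopologicalSpace α] [T3Space α]
    (h : IsHeteroclinic z l r) {x : ℤ → α} (hx : x ∉ orbit l ∪ orbit r) :
    ∀ᶠ y in 𝓝 x, y ∈ heteroclinicSet z l r → y = x :=
  eventually_mem_union_range_imp_eq h.finite_limits.isClosed h.tendsto_translate hx

lemma mem_limits_of_periodic (h : IsHeteroclinic z l r) {x : ℤ → α} {p : ℤ} (hp : 0 < p)
    (hxp : Function.Periodic x p) (hx : x ∈ heteroclinicSet z l r) : x ∈ orbit l ∪ orbit r := by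
  refine hx.elim id ?_
  rintro ⟨m, rfl⟩
  obtain ⟨q, hq, hr⟩ := h.periodic_right
  obtain rfl : z = r := eq_of_periodic_of_eventuallyEq hp hq
    (periodic_of_periodic_translate hxp) hr h.eventuallyEq_atTop
  exact Or.inr ⟨m, rfl⟩

end IsHeteroclinic

end Heteroclinic

section Words

variable {α : Type*} {n : ℕ} {x : ℤ → α}

/-- The word of length `n` of `x` starting at position `k`. -/
def wordAt (n : ℕ) (x : ℤ → α) (k : ℤ) : Fin n → α := fun i => x (k + (i : ℕ))

lemma wordAt_translate (n : ℕ) (x : ℤ → α) (m k : ℤ) :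
    wordAt n (translate m x) k = wordAt n x (k + m) :=
  funext fun i => congrArg x (add_right_comm k i m)

lemma image_wordAt_orbit (n : ℕ) (x : ℤ → α) :
    (fun y => wordAt n y 0) '' orbit x = Set.range (wordAt n x) := by
  rw [orbit, ← Set.range_comp]
  exact congrArg Set.range (funext fun m => by
    rw [Function.comp_apply, wordAt_translate, zero_add])

lemma exists_wordAt_add_eq [Finite α] (n : ℕ) (x : ℤ → α) {S : Set ℤ} (hS : S.Infinite) :
    ∃ a ∈ S, ∃ p > 0, a + p ∈ S ∧ wordAt n x (a + p) = wordAt n x a := by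
  obtain ⟨a, ha, b, hb, hab, heq⟩ :=
    hS.exists_lt_map_eq_of_mapsTo (Set.mapsTo_univ (wordAt n x) S) Set.finite_univ
  exact ⟨a, ha, b - a, sub_pos.2 hab, by rwa [add_sub_cancel], by rw [add_sub_cancel, heq]⟩

/-- The sequence `g` of positions traces a bi-infinite path in the graph whose vertices are the
words of length `n` of `x`, with an edge from the word at each position to the word at the next. -/
def IsRauzyWalk (n : ℕ) (x : ℤ → α) (g : ℤ → ℤ) : Prop :=
  ∀ k, wordAt n x (g (k + 1)) = wordAt n x (g k + 1)

lemma isRauzyWalk_id (n : ℕ) (x : ℤ → α) : IsRauzyWalk n x id := fun _ => rfl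

lemma isRauzyWalk_toIcoMod {a p : ℤ} (hp : 0 < p) (hw : wordAt n x (a + p) = wordAt n x a) :
    IsRauzyWalk n x (toIcoMod hp a) := by
  intro k
  obtain ⟨hat, htb⟩ := toIcoMod_mem_Ico hp a k
  have hsucc : toIcoMod hp a (k + 1) = toIcoMod hp a (toIcoMod hp a k + 1) := by
    conv_lhs => rw [← toIcoMod_add_toIcoDiv_zsmul hp a k, add_right_comm, toIcoMod_add_zsmul]
  rw [hsucc]
  obtain hlt | heq := (Int.add_one_le_of_lt htb).lt_or_eq
  · rw [(toIcoMod_eq_self hp).2 ⟨by omega, hlt⟩]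
  · rw [heq, toIcoMod_apply_right, hw]

namespace IsRauzyWalk

variable {g h : ℤ → ℤ}

lemma ite (hg : IsRauzyWalk n x g) (hh : IsRauzyWalk n x h) {s : ℤ}
    (hs : wordAt n x (g s) = wordAt n x (h s)) :
    IsRauzyWalk n x fun k => if k < s then g k else h k := by
  intro k
  obtain hlt | rfl | hgt := lt_trichotomy (k + 1) s
  · simpa only [if_pos hlt, if_pos ((lt_add_one k).trans hlt)] using hg k
  · simpa only [if_neg (lt_irrefl _), if_pos (lt_add_one k), ← hs] using hg k
  · simpa only [if_neg hgt.not_gt, if_neg (Int.lt_add_one_iff.1 hgt).not_gt] using hh k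

lemma wordAt_comp (hg : IsRauzyWalk n x g) (k : ℤ) : wordAt n (x ∘ g) k = wordAt n x (g k) := by
  have hletter : ∀ i < n, ∀ k, x (g (k + i)) = x (g k + i) := by
    intro i
    induction i with
    | zero => simp
    | succ i ih =>
      intro hi k
      calc x (g (k + (i + 1 : ℕ))) = x (g (k + 1 + i)) := by push_cast; ring_nf
        _ = x (g (k + 1) + i) := ih (by omega) (k + 1)
        _ = x (g k + 1 + i) := congrFun (hg k) ⟨i, by omega⟩
        _ = x (g k + (i + 1 : ℕ)) := by push_cast; ring_nf
  exact funext fun i => hletter i i.2 k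

lemma range_wordAt_comp_subset (hg : IsRauzyWalk n x g) :
    Set.range (wordAt n (x ∘ g)) ⊆ Set.range (wordAt n x) :=
  Set.range_subset_iff.2 fun k => ⟨g k, (hg.wordAt_comp k).symm⟩

end IsRauzyWalk

lemma exists_isHeteroclinic [Finite α] (n : ℕ) (x : ℤ → α) :
    ∃ z l r, IsHeteroclinic z l r ∧ wordAt n z 0 = wordAt n x 0 ∧
      Set.range (wordAt n l) ∪ Set.range (wordAt n r) ∪ Set.range (wordAt n z) ⊆
        Set.range (wordAt n x) := by
  obtain ⟨a, ha, p, hp, -, hright⟩ := exists_wordAt_add_eq n x (Set.Ioi_infinite 0)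
  obtain ⟨c, -, q, hq, hcq, hleft⟩ := exists_wordAt_add_eq n x (Set.Iic_infinite 0)
  rw [Set.mem_Ioi] at ha
  rw [Set.mem_Iic] at hcq
  have hl := isRauzyWalk_toIcoMod hq hleft
  have hr := isRauzyWalk_toIcoMod hp hright
  set g : ℤ → ℤ := fun k =>
    if k < c + q then toIcoMod hq c k else if k < a then k else toIcoMod hp a k with hg_def
  have hg : IsRauzyWalk n x g := by
    refine hl.ite ((isRauzyWalk_id n x).ite hr ?_) ?_
    · rw [toIcoMod_apply_left, id]
    · rw [toIcoMod_apply_right, if_pos (by omega), id, hleft]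
  refine ⟨x ∘ g, x ∘ toIcoMod hq c, x ∘ toIcoMod hp a, ⟨?_, ?_, ?_, ?_⟩, ?_, ?_⟩
  · filter_upwards [eventually_lt_atBot (c + q)] with k hk
    simp only [Function.comp_apply, hg_def, if_pos hk]
  · filter_upwards [eventually_ge_atTop a] with k hk
    simp only [Function.comp_apply, hg_def, if_neg (show ¬k < c + q by omega), if_neg hk.not_gt]
  · exact ⟨q, hq, (toIcoMod_periodic hq c).comp x⟩
  · exact ⟨p, hp, (toIcoMod_periodic hp a).comp x⟩
  · rw [hg.wordAt_comp]
    simp only [hg_def, if_neg hcq.not_gt, if_pos ha]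
  · exact Set.union_subset
      (Set.union_subset hl.range_wordAt_comp_subset hr.range_wordAt_comp_subset)
      hg.range_wordAt_comp_subset

lemma IsHeteroclinic.exists_range_wordAt_subset {z l r : ℤ → α} (h : IsHeteroclinic z l r) :
    ∃ a b : ℤ, ∀ N : ℕ, Set.range (wordAt N z) ⊆
      Set.range (wordAt N l) ∪ Set.range (wordAt N r) ∪ wordAt N z '' Set.Ioo (a - N) b := by
  obtain ⟨a, ha⟩ := eventually_atBot.1 h.eventuallyEq_atBot
  obtain ⟨b, hb⟩ := eventually_atTop.1 h.eventuallyEq_atTop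
  refine ⟨a, b, fun N => Set.range_subset_iff.2 fun m => ?_⟩
  by_cases hma : m ≤ a - N
  · exact Or.inl (Or.inl ⟨m, funext fun i => (ha _ (by omega)).symm⟩)
  by_cases hbm : b ≤ m
  · exact Or.inl (Or.inr ⟨m, funext fun i => (hb _ (by omega)).symm⟩)
  · exact Or.inr ⟨m, ⟨not_le.1 hma, not_le.1 hbm⟩, rfl⟩

end Words

section FullShift

variable {d : ℕ}

lemma shift_iterate (j : ℕ) (x : FullShift d) : (shift d)^[j] x = translate j x := by
  induction j with
  | zero => exact (translate_zero x).symm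
  | succ j ih =>
    rw [Function.iterate_succ_apply', ih, Nat.cast_succ, add_comm, translate_add]
    rfl

lemma isPeriodicOf_iff {x : FullShift d} {ℓ : ℕ} :
    IsPeriodicOf x ℓ ↔ 0 < ℓ ∧ Function.Periodic x (ℓ : ℤ) := by
  rw [IsPeriodicOf, shift_iterate, translate_eq_self_iff, Nat.one_le_iff_ne_zero,
    Nat.pos_iff_ne_zero]

lemma exists_isPeriodicOf {x : FullShift d} {p : ℤ} (hp : 0 < p) (hx : Function.Periodic x p) :
    ∃ ℓ, IsPeriodicOf x ℓ := by
  lift p to ℕ using hp.le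
  exact ⟨p, isPeriodicOf_iff.2 ⟨Int.natCast_pos.1 hp, hx⟩⟩

lemma range_shift_iterate_of_periodic {x : FullShift d} {p : ℤ} (hp : 0 < p)
    (hx : Function.Periodic x p) : (Set.range fun j : ℕ => (shift d)^[j] x) = orbit x := by
  refine Set.Subset.antisymm (Set.range_subset_iff.2 fun j => ⟨j, (shift_iterate j x).symm⟩) ?_
  rw [orbit, ← (periodic_translate hx).image_Ioc hp 0]
  rintro _ ⟨m, hm, rfl⟩
  lift m to ℕ using hm.1.le
  exact ⟨m, shift_iterate m x⟩

lemma shift_mem_iff {X : Set (FullShift d)} (hX : shift d '' X = X) {x : FullShift d} :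
    shift d x ∈ X ↔ x ∈ X := by
  have hinj : Function.Injective (shift d) := fun y z h => funext fun k => by
    simpa only [shift, sub_add_cancel] using congrFun h (k - 1)
  rw [← hX, hinj.mem_set_image, hX]

lemma orbit_subset {X : Set (FullShift d)} (hX : shift d '' X = X) {x : FullShift d}
    (hx : x ∈ X) : orbit x ⊆ X := by
  refine Set.range_subset_iff.2 fun m => ?_
  have hsucc (m : ℤ) : translate (m + 1) x ∈ X ↔ translate m x ∈ X := by
    rw [add_comm, translate_add]
    exact shift_mem_iff hX
  induction m using Int.induction_on with
  | zero => rwa [translate_zero]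
  | succ i ih => exact (hsucc i).2 ih
  | pred i ih => exact (hsucc _).1 (by rwa [sub_add_cancel])

lemma shift_image_orbit (x : FullShift d) : shift d '' orbit x = orbit x := by
  have hsucc : (shift d ∘ fun m => translate m x) = (fun m => translate m x) ∘ (1 + ·) :=
    funext fun m => (translate_add 1 m x).symm
  rw [orbit, ← Set.range_comp, hsucc]
  exact (Equiv.addLeft (1 : ℤ)).surjective.range_comp _

lemma isShiftSpace_iUnion_heteroclinicSet {ι : Type*} [Finite ι] [Nonempty ι]
    {z l r : ι → FullShift d} (h : ∀ i, IsHeteroclinic (z i) (l i) (r i)) :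
    IsShiftSpace (⋃ i, heteroclinicSet (z i) (l i) (r i)) := by
  refine ⟨Set.nonempty_iUnion.2 ⟨Classical.arbitrary ι, _, Or.inr (self_mem_orbit _)⟩,
    isClosed_iUnion_of_finite fun i => (h i).isClosed_heteroclinicSet, ?_⟩
  simp only [heteroclinicSet, Set.image_iUnion, Set.image_union, shift_image_orbit]

end FullShift

section Nonwandering

variable {d : ℕ}

lemma mem_nonwanderingSet_of_isPeriodicOf {Z : Set (FullShift d)} {x : FullShift d} {ℓ : ℕ}
    (hx : x ∈ Z) (hℓ : IsPeriodicOf x ℓ) : x ∈ nonwanderingSet Z :=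
  ⟨hx, fun _ _ hxU => ⟨ℓ, hℓ.1, x, ⟨x, ⟨hx, hxU⟩, hℓ.2⟩, hx, hxU⟩⟩

lemma exists_isPeriodicOf_of_isolated {Z : Set (FullShift d)} {x : FullShift d}
    (hx : x ∈ nonwanderingSet Z) (hiso : ∀ᶠ y in 𝓝 x, y ∈ Z → y = x) :
    ∃ ℓ, IsPeriodicOf x ℓ := by
  obtain ⟨U, hUx, hU, hxU⟩ := eventually_nhds_iff.1 hiso
  obtain ⟨ℓ, hℓ, _, ⟨y, ⟨hyZ, hyU⟩, rfl⟩, hyZ', hyU'⟩ := hx.2 U hU hxU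
  obtain rfl := hUx y hyU hyZ
  exact ⟨ℓ, hℓ, hUx _ hyU' hyZ'⟩

lemma nonwanderingSet_iUnion_heteroclinicSet {ι : Type*} [Finite ι] {z l r : ι → FullShift d}
    (h : ∀ i, IsHeteroclinic (z i) (l i) (r i)) :
    nonwanderingSet (⋃ i, heteroclinicSet (z i) (l i) (r i)) =
      ⋃ i, (orbit (l i) ∪ orbit (r i)) := by
  refine Set.Subset.antisymm (fun x hx => ?_) (Set.iUnion_subset fun i x hx => ?_)
  · by_contra hxP
    have hxP' : ∀ i, x ∉ orbit (l i) ∪ orbit (r i) := fun i hi => hxP (Set.mem_iUnion_of_mem i hi)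
    obtain ⟨ℓ, hℓ⟩ := exists_isPeriodicOf_of_isolated hx <| by
      filter_upwards [eventually_all.2 fun i =>
        (h i).eventually_mem_heteroclinicSet_imp_eq (hxP' i)] with y hy hyZ
      obtain ⟨i, hi⟩ := Set.mem_iUnion.1 hyZ
      exact hy i hi
    obtain ⟨hpos, hper⟩ := isPeriodicOf_iff.1 hℓ
    obtain ⟨i, hi⟩ := Set.mem_iUnion.1 hx.1
    exact hxP' i ((h i).mem_limits_of_periodic (Int.natCast_pos.2 hpos) hper hi)
  · have hper : ∃ ℓ, IsPeriodicOf x ℓ := by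
      obtain ⟨p, hp, hl⟩ := (h i).periodic_left
      obtain ⟨q, hq, hr⟩ := (h i).periodic_right
      obtain ⟨m, rfl⟩ | ⟨m, rfl⟩ := hx
      · exact exists_isPeriodicOf hp (hl.add_const m)
      · exact exists_isPeriodicOf hq (hr.add_const m)
    obtain ⟨ℓ, hℓ⟩ := hper
    exact mem_nonwanderingSet_of_isPeriodicOf (Set.mem_iUnion_of_mem i (Or.inl hx)) hℓ

lemma exists_finset_nonwanderingSet_eq {ι : Type*} [Finite ι] {z l r : ι → FullShift d}
    (h : ∀ i, IsHeteroclinic (z i) (l i) (r i)) :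
    ∃ F : Finset (FullShift d), (∀ y ∈ F, ∃ ℓ, IsPeriodicOf y ℓ) ∧
      nonwanderingSet (⋃ i, heteroclinicSet (z i) (l i) (r i)) =
        ⋃ y ∈ F, Set.range fun j : ℕ => (shift d)^[j] y := by
  have hfin : (Set.range l ∪ Set.range r).Finite := (Set.finite_range l).union (Set.finite_range r)
  have hper : ∀ y ∈ Set.range l ∪ Set.range r, ∃ p : ℤ, 0 < p ∧ Function.Periodic y p := by
    rintro y (⟨i, rfl⟩ | ⟨i, rfl⟩)
    exacts [(h i).periodic_left, (h i).periodic_right]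
  refine ⟨hfin.toFinset, fun y hy => ?_, ?_⟩
  · obtain ⟨p, hp, hyp⟩ := hper y (hfin.mem_toFinset.1 hy)
    exact exists_isPeriodicOf hp hyp
  · calc nonwanderingSet (⋃ i, heteroclinicSet (z i) (l i) (r i))
        = ⋃ i, (orbit (l i) ∪ orbit (r i)) := nonwanderingSet_iUnion_heteroclinicSet h
      _ = ⋃ y ∈ Set.range l ∪ Set.range r, orbit y := by
        rw [Set.biUnion_union, Set.biUnion_range, Set.biUnion_range, Set.iUnion_union_distrib]
      _ = ⋃ y ∈ hfin.toFinset, Set.range fun j : ℕ => (shift d)^[j] y := by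
        simp only [Set.Finite.mem_toFinset]
        refine Set.iUnion₂_congr fun y hy => ?_
        obtain ⟨p, hp, hyp⟩ := hper y hy
        exact (range_shift_iterate_of_periodic hp hyp).symm

end Nonwandering

section Language

variable {d : ℕ}

lemma langSet_eq_image (Z : Set (FullShift d)) (n : ℕ) :
    langSet Z n = (fun x => wordAt n x 0) '' Z := by
  ext w
  simp [langSet, cyl, wordAt, Set.Nonempty, funext_iff]

lemma langSet_iUnion_heteroclinicSet {ι : Type*} (z l r : ι → FullShift d) (n : ℕ) :
    langSet (⋃ i, heteroclinicSet (z i) (l i) (r i)) n =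
      ⋃ i, (Set.range (wordAt n (l i)) ∪ Set.range (wordAt n (r i)) ∪
        Set.range (wordAt n (z i))) := by
  simp only [langSet_eq_image, heteroclinicSet, Set.image_iUnion, Set.image_union,
    image_wordAt_orbit]

lemma range_wordAt_subset_langSet {X : Set (FullShift d)} (hX : shift d '' X = X)
    {x : FullShift d} (hx : x ∈ X) (n : ℕ) : Set.range (wordAt n x) ⊆ langSet X n := by
  rw [langSet_eq_image, ← image_wordAt_orbit]
  exact Set.image_mono (orbit_subset hX hx)

end Language

section Entropy

variable {d : ℕ}

lemma tendsto_add_mul_log_div (a b : ℝ) :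
    Tendsto (fun N : ℕ => (a + b * Real.log (N + 1)) / (N + 1 : ℝ)) atTop (𝓝 0) := by
  have hlittleO : (fun t : ℝ => a + b * Real.log t) =o[atTop] id :=
    (Asymptotics.isLittleO_const_id_atTop a).add (Real.isLittleO_log_id_atTop.const_mul_left b)
  exact hlittleO.tendsto_div_nhds_zero.comp
    (tendsto_atTop_add_const_right _ (1 : ℝ) tendsto_natCast_atTop_atTop)

lemma entTop_eq_zero_of_ncard_langSet_le {Z : Set (FullShift d)} {C k : ℕ}
    (h : ∀ N : ℕ, (langSet Z (N + 1)).ncard ≤ C * (N + 1) ^ k) : entTop Z = 0 := by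
  have hnonneg : ∀ N : ℕ, 0 ≤ (1 / (N + 1 : ℝ)) * Real.log (langSet Z (N + 1)).ncard := fun N =>
    mul_nonneg (by positivity) (Real.log_natCast_nonneg _)
  have hlog (N : ℕ) : Real.log (langSet Z (N + 1)).ncard ≤
      Real.log (C + 1) + k * Real.log (N + 1) := by
    rw [← Real.log_pow, ← Real.log_mul (by positivity) (by positivity)]
    obtain hzero | hpos := (langSet Z (N + 1)).ncard.eq_zero_or_pos
    · rw [hzero, Nat.cast_zero, Real.log_zero]
      exact_mod_cast Real.log_natCast_nonneg ((C + 1) * (N + 1) ^ k)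
    · refine Real.log_le_log (Nat.cast_pos.2 hpos) ?_
      exact_mod_cast (h N).trans (Nat.mul_le_mul_right _ C.le_succ)
  refine le_antisymm
    (ge_of_tendsto' (tendsto_add_mul_log_div (Real.log (C + 1)) k) fun N => ?_)
    (Real.iInf_nonneg hnonneg)
  calc entTop Z ≤ (1 / (N + 1 : ℝ)) * Real.log (langSet Z (N + 1)).ncard :=
        ciInf_le ⟨0, Set.forall_mem_range.2 hnonneg⟩ N
    _ ≤ (1 / (N + 1 : ℝ)) * (Real.log (C + 1) + k * Real.log (N + 1)) := by gcongr; exact hlog N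
    _ = _ := by ring

lemma IsHeteroclinic.exists_ncard_wordAt_le {α : Type*} {z l r : ℤ → α}
    (h : IsHeteroclinic z l r) :
    ∃ C, ∀ N : ℕ, (Set.range (wordAt N l) ∪ Set.range (wordAt N r) ∪
      Set.range (wordAt N z)).ncard ≤ N + C := by
  obtain ⟨a, b, hab⟩ := h.exists_range_wordAt_subset
  refine ⟨(orbit l ∪ orbit r).ncard + (b - a).toNat, fun N => ?_⟩
  have hlimits : Set.range (wordAt N l) ∪ Set.range (wordAt N r) =
      (fun y => wordAt N y 0) '' (orbit l ∪ orbit r) := by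
    rw [Set.image_union, image_wordAt_orbit, image_wordAt_orbit]
  have hwindow : (Set.Ioo (a - N) b).ncard ≤ N + (b - a).toNat := by
    rw [← Finset.coe_Ioo, Set.ncard_coe_finset, Int.card_Ioo]
    omega
  calc _ ≤ ((fun y => wordAt N y 0) '' (orbit l ∪ orbit r) ∪
        wordAt N z '' Set.Ioo (a - N) b).ncard := by
        refine Set.ncard_le_ncard ?_
          ((h.finite_limits.image _).union ((Set.finite_Ioo _ _).image _))
        rw [← hlimits]
        exact Set.union_subset Set.subset_union_left (hab N)
    _ ≤ (orbit l ∪ orbit r).ncard + (Set.Ioo (a - N) b).ncard :=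
        (Set.ncard_union_le _ _).trans (add_le_add (Set.ncard_image_le h.finite_limits)
          (Set.ncard_image_le (Set.finite_Ioo _ _)))
    _ ≤ N + ((orbit l ∪ orbit r).ncard + (b - a).toNat) := by omega

lemma entTop_iUnion_heteroclinicSet {ι : Type*} [Finite ι] {z l r : ι → FullShift d}
    (h : ∀ i, IsHeteroclinic (z i) (l i) (r i)) :
    entTop (⋃ i, heteroclinicSet (z i) (l i) (r i)) = 0 := by
  choose C hC using fun i => (h i).exists_ncard_wordAt_le
  cases nonempty_fintype ι
  refine entTop_eq_zero_of_ncard_langSet_le (C := ∑ i, (1 + C i)) (k := 1) fun N => ?_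
  rw [langSet_iUnion_heteroclinicSet]
  calc _ ≤ ∑ i, (Set.range (wordAt (N + 1) (l i)) ∪ Set.range (wordAt (N + 1) (r i)) ∪
        Set.range (wordAt (N + 1) (z i))).ncard := Set.ncard_iUnion_le_of_fintype _
    _ ≤ ∑ i, (1 + C i) * (N + 1) := Finset.sum_le_sum fun i _ =>
        (hC i (N + 1)).trans (by nlinarith)
    _ = (∑ i, (1 + C i)) * (N + 1) ^ 1 := by rw [pow_one, Finset.sum_mul]

end Entropy

theorem statement7_general {d : ℕ} {X : Set (FullShift d)} (hne : X.Nonempty)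
    (hX : shift d '' X = X) (n : ℕ) :
    ∃ Z : Set (FullShift d), IsShiftSpace Z ∧ langSet Z n = langSet X n ∧
      (∃ F : Finset (FullShift d),
        (∀ y ∈ F, ∃ ℓ : ℕ, IsPeriodicOf y ℓ) ∧
        nonwanderingSet Z = ⋃ y ∈ F, Set.range fun j : ℕ => (shift d)^[j] y) ∧
      entTop Z = 0 := by
  have hword : ∀ w : langSet X n, ∃ x ∈ X, wordAt n x 0 = w := fun w =>
    (langSet_eq_image X n).subset w.2
  choose x hxX hxw using hword
  choose z l r hz hzx hsub using fun w => exists_isHeteroclinic n (x w)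
  have hnonempty : Nonempty (langSet X n) :=
    Set.Nonempty.to_subtype (langSet_eq_image X n ▸ hne.image _)
  refine ⟨⋃ w, heteroclinicSet (z w) (l w) (r w), isShiftSpace_iUnion_heteroclinicSet hz, ?_,
    exists_finset_nonwanderingSet_eq hz, entTop_iUnion_heteroclinicSet hz⟩
  rw [langSet_iUnion_heteroclinicSet]
  refine Set.Subset.antisymm (Set.iUnion_subset fun w => (hsub w).trans
    (range_wordAt_subset_langSet hX (hxX w) n)) fun w hw => ?_
  exact Set.mem_iUnion.2 ⟨⟨w, hw⟩, Or.inr ⟨0, (hzx _).trans (hxw _)⟩⟩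

/-- for every shift space `X` and every `n` there is a shift space `Z`
with the same words of length `n` whose nonwandering set is a finite union of periodic
orbits; in particular `h_top(Z) = 0`. -/
theorem statement7 {d : ℕ} (hd : 2 ≤ d) (X : Set (FullShift d)) (hX : IsShiftSpace X)
    (n : ℕ) :
    ∃ Z : Set (FullShift d), IsShiftSpace Z ∧ langSet Z n = langSet X n ∧
      (∃ F : Finset (FullShift d),
        (∀ y ∈ F, ∃ ℓ : ℕ, IsPeriodicOf y ℓ) ∧
        nonwanderingSet Z = ⋃ y ∈ F, Set.range fun j : ℕ => (shift d)^[j] y) ∧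
      entTop Z = 0 := by
  exact statement7_general hX.1 hX.2.2 n

end PaperStmt
end
end

section
/- Let X = X_{S_0,…,S_{d−1},Π} be a generalized gap shift with I = {i : S_i infinite} nonempty. Then the ergodic f-invariant Borel probability measures μ on X with μ(X_lim) = 1 are exactly the Dirac measures δ_{i^∞} concentrated on the fixed points i^∞, i ∈ I. -/
open Filter MeasureTheory Topology
open scoped BigOperators ENNReal

noncomputable section

namespace PaperStmt

/-- The generator word `σ(0)^{s_{σ(0)}} σ(1)^{s_{σ(1)}} ⋯ σ(d−1)^{s_{σ(d−1)}} d`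
over the alphabet `{0,…,d} = Fin (d+1)`. -/
def gapGen (d : ℕ) (σ : Equiv.Perm (Fin d)) (s : Fin d → ℕ) : List (Fin (d + 1)) :=
  (List.ofFn fun j : Fin d => List.replicate (s (σ j)) (Fin.castSucc (σ j))).flatten
    ++ [Fin.last d]

/-- The generating set of the generalized gap shift `X_{S_0,…,S_{d−1},Π}`. -/
def gapGens (d : ℕ) (S : Fin d → Set ℕ) (P : Set (Equiv.Perm (Fin d))) :
    Set (List (Fin (d + 1))) :=
  {g | ∃ σ ∈ P, ∃ s : Fin d → ℕ, (∀ j, s j ∈ S j) ∧ g = gapGen d σ s}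

/-- The constant bi-infinite sequence `a^∞`. -/
def constSeq {d : ℕ} (a : Fin d) : FullShift d := fun _ => a

/-- The finite segment `x_a x_{a+1} ⋯ x_{a+n-1}` of `x`, as a list. -/
def segList {d : ℕ} (x : FullShift d) (a : ℤ) (n : ℕ) : List (Fin d) :=
  List.ofFn fun t : Fin n => x (a + (t : ℕ))

/-- `w` is a (nonempty) finite concatenation `g_{ℓ_1}⋯g_{ℓ_k}` of generators of `𝒢`. -/
def IsConcat {d : ℕ} (𝒢 : Set (List (Fin d))) (w : List (Fin d)) : Prop :=
  ∃ L : List (List (Fin d)), L ≠ [] ∧ (∀ g ∈ L, g ∈ 𝒢) ∧ w = L.flatten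

/-- `x` is a right-infinite concatenation `g_{ℓ_1} g_{ℓ_2} g_{ℓ_3} ⋯` of generators
of `𝒢`, starting at position `a`. -/
def RightParsingFrom {d : ℕ} (𝒢 : Set (List (Fin d))) (x : FullShift d) (a : ℤ) : Prop :=
  ∃ p : ℕ → ℤ, p 0 = a ∧ StrictMono p ∧ ∀ j : ℕ, ∃ g ∈ 𝒢,
    p (j + 1) = p j + g.length ∧ ∀ (l : ℕ) (hl : l < g.length), x (p j + l) = g[l]

/-- `x` is a left-infinite concatenation `⋯ g_{ℓ_3} g_{ℓ_2} g_{ℓ_1}` of generators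
of `𝒢`, ending at position `b` (exclusive). -/
def LeftParsingTo {d : ℕ} (𝒢 : Set (List (Fin d))) (x : FullShift d) (b : ℤ) : Prop :=
  ∃ p : ℕ → ℤ, p 0 = b ∧ StrictAnti p ∧ ∀ j : ℕ, ∃ g ∈ 𝒢,
    p j = p (j + 1) + g.length ∧ ∀ (l : ℕ) (hl : l < g.length), x (p (j + 1) + l) = g[l]

/-!
By Poincaré recurrence, almost every point of an invariant measure is such that each letter
occurring in it recurs arbitrarily far in both directions. If the letter `d` occurs in such a point
of `X`, its occurrences cut the point, a limit of concatenations, into generators, so the point lies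
in `X_seq`. If `d` does not occur, every finite segment lies inside a single generator, where the
occurrences of each letter form an interval; recurrence then leaves only a constant sequence `i^∞`,
and its runs of `i` inside generators are arbitrarily long, so `S_i` is infinite. An ergodic measure
charging this finite set of fixed points is a Dirac mass at one of them.
-/

section IntSequences

/-- A two-sided sequence in which every letter that occurs recurs arbitrarily far to the right and
arbitrarily far to the left; this is what Poincaré's theorem provides at almost every point. -/
def IsLetterRecurrent {α : Type*} (x : ℤ → α) : Prop :=
  ∀ k, ¬BddAbove (x ⁻¹' {x k}) ∧ ¬BddBelow (x ⁻¹' {x k})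

lemma exists_le_and_lt_succ_of_strictMono {p : ℤ → ℤ} (hp : StrictMono p) (n : ℤ) :
    ∃ j, p j ≤ n ∧ n < p (j + 1) := by
  obtain ⟨_, ⟨a, rfl⟩, ha⟩ :=
    not_bddBelow_iff.1 hp.not_bddBelow_range_of_isPredArchimedean (n + 1)
  obtain ⟨_, ⟨b, rfl⟩, hb⟩ :=
    not_bddAbove_iff.1 hp.not_bddAbove_range_of_isSuccArchimedean (n + 1)
  have hmem : n + 1 ∈ Set.Ioc (p a) (p b) := ⟨ha, hb.le⟩
  rw [← hp.monotone.biUnion_Ico_Ioc_map_succ, Set.mem_iUnion₂] at hmem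
  obtain ⟨j, -, hj, hj'⟩ := hmem
  exact ⟨j, Int.lt_add_one_iff.1 hj, Int.add_one_le_iff.1 hj'⟩

lemma exists_strictMono_range_eq {A : Set ℤ} (habove : ¬BddAbove A) (hbelow : ¬BddBelow A) :
    ∃ p : ℤ → ℤ, StrictMono p ∧ Set.range p = A := by
  rw [not_bddAbove_iff] at habove
  rw [not_bddBelow_iff] at hbelow
  classical
  let _ : LocallyFiniteOrder A := inferInstanceAs (LocallyFiniteOrder (Subtype (· ∈ A)))
  let _ : SuccOrder A := LinearLocallyFiniteOrder.succOrder A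
  let _ : PredOrder A := LinearLocallyFiniteOrder.predOrder A
  have : Nonempty A := (habove 0).elim fun n hn => ⟨⟨n, hn.1⟩⟩
  have : NoMaxOrder A := ⟨fun t => (habove t).elim fun n hn => ⟨⟨n, hn.1⟩, hn.2⟩⟩
  have : NoMinOrder A := ⟨fun t => (hbelow t).elim fun n hn => ⟨⟨n, hn.1⟩, hn.2⟩⟩
  let e : A ≃o ℤ := orderIsoIntOfLinearSuccPredArch
  refine ⟨fun j => e.symm j, fun _ _ h => e.symm.strictMono h, ?_⟩
  rw [← Function.comp_def, e.symm.surjective.range_comp, Subtype.range_coe]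

lemma notMem_range_of_lt_of_lt_succ {p : ℤ → ℤ} (hp : StrictMono p) {j k : ℤ} (hj : p j < k)
    (hj' : k < p (j + 1)) : k ∉ Set.range p := by
  rintro ⟨i, rfl⟩
  have h₁ := hp.lt_iff_lt.1 hj
  have h₂ := hp.lt_iff_lt.1 hj'
  omega

end IntSequences

section Lists

variable {α β : Type*}

lemma eq_of_concat_prefix_concat {u v : List α} {c : α} (hv : c ∉ v)
    (h : u ++ [c] <+: v ++ [c]) : u = v := by
  rcases List.prefix_concat_iff.1 h with h | h
  · exact List.append_cancel_right h
  · exact absurd (h.subset (by simp)) hv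

lemma getElem_eq_of_sublist_map_sorted [PartialOrder α] {f : α → β} (hf : f.Injective)
    {l : List α} (hl : l.SortedLE) {w : List β} (hw : w.Sublist (l.map f)) {i j k : ℕ}
    (hij : i ≤ j) (hjk : j ≤ k) (hk : k < w.length) (h : w[i] = w[k]) : w[j] = w[i] := by
  obtain ⟨l', hl', rfl⟩ := List.sublist_map_iff.1 hw
  have hsorted : l'.SortedLE := (hl.pairwise.sublist hl').sortedLE
  simp only [List.length_map] at hk
  simp only [List.getElem_map, hf.eq_iff] at h ⊢
  exact le_antisymm (h ▸ hsorted.getElem_le_getElem_of_le hjk)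
    (hsorted.getElem_le_getElem_of_le hij)

end Lists

section Segments

variable {d : ℕ} {x y : FullShift d} {a b : ℤ} {m n : ℕ} {w u v : List (Fin d)}

@[simp]
lemma length_segList : (segList x a n).length = n := List.length_ofFn

@[simp]
lemma getElem_segList {t : ℕ} (ht : t < (segList x a n).length) :
    (segList x a n)[t] = x (a + t) := List.getElem_ofFn _

lemma mem_segList {c : Fin d} : c ∈ segList x a n ↔ ∃ k, a ≤ k ∧ k < a + n ∧ x k = c := by
  simp only [segList, List.mem_ofFn', Set.mem_range]
  constructor
  · rintro ⟨t, rfl⟩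
    exact ⟨a + (t : ℕ), by omega, by omega, rfl⟩
  · rintro ⟨k, hak, hkn, rfl⟩
    exact ⟨⟨(k - a).toNat, by omega⟩, congrArg x (by simp only; omega)⟩

lemma segList_add : segList x a (m + n) = segList x a m ++ segList x (a + m) n := by
  simp [segList, List.ofFn_add, add_assoc]

lemma segList_one : segList x a 1 = [x a] := by
  simp [segList]

lemma segList_constSeq {c : Fin d} : segList (constSeq c) a n = List.replicate n c :=
  List.ofFn_const n c

lemma segList_length_eq_iff :
    segList x a w.length = w ↔ ∀ (l : ℕ) (hl : l < w.length), x (a + l) = w[l] := by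
  simp [List.ext_getElem_iff]

lemma segList_eq_segList_iff :
    segList y a n = segList x a n ↔ ∀ k, a ≤ k → k < a + n → y k = x k := by
  simp only [List.ext_getElem_iff, length_segList, getElem_segList, true_and]
  constructor
  · intro h k hak hkn
    obtain ⟨t, rfl⟩ := Int.le.dest hak
    exact h t (by omega) (by omega)
  · intro h t ht _
    exact h _ (by omega) (by omega)

lemma segList_infix (hab : a ≤ b) (hmn : b + n ≤ a + m) : segList x b n <:+: segList x a m := by
  obtain ⟨i, rfl⟩ := Int.le.dest hab
  obtain ⟨j, rfl⟩ := Nat.exists_eq_add_of_le (show i + n ≤ m by omega)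
  exact ⟨segList x a i, segList x (a + (i + n : ℕ)) j, by rw [segList_add, segList_add]⟩

lemma segList_prefix (hmn : m ≤ n) : segList x a m <+: segList x a n := by
  obtain ⟨j, rfl⟩ := Nat.exists_eq_add_of_le hmn
  exact ⟨_, segList_add.symm⟩

lemma segList_eq_of_segList_append
    (h : segList x a (u ++ w ++ v).length = u ++ w ++ v) :
    segList x (a + u.length) w.length = w := by
  rw [List.length_append, List.length_append, segList_add, segList_add] at h
  exact (List.append_inj (List.append_inj h (by simp)).1 (by simp)).2

lemma mem_closure_iff_forall_exists_segList_eq {A : Set (FullShift d)} :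
    x ∈ closure A ↔ ∀ (a : ℤ) (n : ℕ), ∃ y ∈ A, segList y a n = segList x a n := by
  simp only [segList_eq_segList_iff]
  constructor
  · intro hx a n
    have hopen : IsOpen {y : FullShift d | ∀ k ∈ Set.Ico a (a + n), y k = x k} := by
      simp only [Set.ofPred_forall]
      exact (Set.finite_Ico a (a + n)).isOpen_biInter fun k _ =>
        (isOpen_discrete {x k}).preimage (continuous_apply (A := fun _ : ℤ => Fin d) k)
    obtain ⟨y, hy, hyA⟩ := mem_closure_iff.1 hx _ hopen fun _ _ => rfl
    exact ⟨y, hyA, fun k hak hkn => hy k ⟨hak, hkn⟩⟩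
  · intro h
    choose y hyA hy using fun n : ℕ => h (-n) (2 * n + 1)
    refine mem_closure_of_tendsto (b := atTop) (f := y) ?_ (Eventually.of_forall hyA)
    refine tendsto_pi_nhds.2 fun k => tendsto_nhds_of_eventually_eq ?_
    filter_upwards [eventually_ge_atTop k.natAbs] with n hn
    exact hy n k (by omega) (by omega)

end Segments

section CodedShifts

variable {d : ℕ} {𝒢 : Set (List (Fin d))} {x y : FullShift d} {a : ℤ} {n : ℕ} {c : Fin d}

lemma exists_generator_segList_of_mem_Xseq (hy : y ∈ Xseq 𝒢) (k : ℤ) :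
    ∃ q : ℤ, ∃ g ∈ 𝒢, q ≤ k ∧ k < q + g.length ∧ segList y q g.length = g := by
  obtain ⟨p, hp, hblock⟩ := hy
  obtain ⟨j, hj, hj'⟩ := exists_le_and_lt_succ_of_strictMono hp k
  obtain ⟨g, hg, hlen, hgy⟩ := hblock j
  exact ⟨p j, g, hg, hj, hlen ▸ hj', segList_length_eq_iff.2 hgy⟩

lemma exists_mem_Xseq_segList_eq {g : List (Fin d)} (hg : g ∈ 𝒢) (hne : g ≠ []) (b : ℤ) :
    ∃ y ∈ Xseq 𝒢, segList y b g.length = g := by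
  have hpos : (0 : ℤ) < g.length := by simpa [List.length_pos_iff] using hne
  have hmod (z : ℤ) : (z % g.length).toNat < g.length := by
    have := Int.emod_nonneg z hpos.ne'
    have := Int.emod_lt_of_pos z hpos
    omega
  let y : FullShift d := fun k => g[((k - b) % g.length).toNat]'(hmod _)
  have hy (j : ℤ) (l : ℕ) (hl : l < g.length) : y (b + j * g.length + l) = g[l] := by
    have : b + j * g.length + l - b = l + j * g.length := by ring
    simp only [y, this, Int.add_mul_emod_self_right,
      Int.emod_eq_of_lt (Int.natCast_nonneg l) (Int.ofNat_lt.2 hl), Int.toNat_natCast]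
  refine ⟨y, ⟨fun j => b + j * g.length, fun i j hij => ?_, fun j => ⟨g, hg, by ring, hy j⟩⟩, ?_⟩
  · simpa using mul_lt_mul_of_pos_right hij hpos
  · simpa using segList_length_eq_iff.2 (hy 0)

lemma constSeq_mem_codedShift_of_replicate_infix
    (h : ∀ n, ∃ g ∈ 𝒢, List.replicate n c <:+: g) : constSeq c ∈ codedShift 𝒢 := by
  refine mem_closure_iff_forall_exists_segList_eq.2 fun a n => ?_
  obtain ⟨g, hg, u, v, rfl⟩ := h (n + 1)
  obtain ⟨y, hy, hyg⟩ := exists_mem_Xseq_segList_eq hg (by simp) (a - u.length)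
  refine ⟨y, hy, ?_⟩
  have hrun : segList y a (n + 1) = List.replicate (n + 1) c := by
    simpa using segList_eq_of_segList_append hyg
  rw [segList_constSeq]
  refine List.eq_replicate_iff.2 ⟨length_segList, fun e he => ?_⟩
  exact List.eq_of_mem_replicate (hrun ▸ (segList_prefix n.le_succ).subset he)

/-- The letter `c` marks the ends of generators: each generator is a word avoiding `c`
followed by `c`. -/
def IsEndMarker (𝒢 : Set (List (Fin d))) (c : Fin d) : Prop :=
  ∀ g ∈ 𝒢, ∃ w, g = w ++ [c] ∧ c ∉ w

namespace IsEndMarker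

lemma constSeq_notMem_Xseq (hc : IsEndMarker 𝒢 c) {e : Fin d} (he : e ≠ c) :
    constSeq e ∉ Xseq 𝒢 := by
  intro h
  obtain ⟨q, g, hg, -, -, hseg⟩ := exists_generator_segList_of_mem_Xseq h 0
  obtain ⟨w, rfl, -⟩ := hc g hg
  have hmem : c ∈ segList (constSeq e) q (w ++ [c]).length := by
    rw [hseg]
    simp
  rw [segList_constSeq] at hmem
  exact he (List.eq_of_mem_replicate hmem).symm

lemma exists_infix (hc : IsEndMarker 𝒢 c) (hx : x ∈ codedShift 𝒢) (hseg : c ∉ segList x a n) :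
    ∃ w, w ++ [c] ∈ 𝒢 ∧ segList x a n <:+: w := by
  obtain ⟨y, hy, hyx⟩ := mem_closure_iff_forall_exists_segList_eq.1 hx a n
  rw [← hyx] at hseg ⊢
  obtain ⟨q, g, hg, hqa, haq, hblock⟩ := exists_generator_segList_of_mem_Xseq hy a
  obtain ⟨w, rfl, -⟩ := hc g hg
  rw [List.length_append, List.length_singleton] at haq hblock
  obtain ⟨hbody, hend⟩ := List.append_inj (segList_add.symm.trans hblock) length_segList
  refine ⟨w, hg, hbody ▸ segList_infix hqa ?_⟩
  by_contra! hlt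
  exact hseg (mem_segList.2 ⟨q + w.length, by omega, hlt, by simpa [segList_one] using hend⟩)

lemma concat_mem_of_return (hc : IsEndMarker 𝒢 c) (hx : x ∈ codedShift 𝒢) {w : List (Fin d)}
    (hw : c ∉ w) (hseg : segList x a (w.length + 2) = c :: (w ++ [c])) : w ++ [c] ∈ 𝒢 := by
  obtain ⟨y, hy, hyx⟩ := mem_closure_iff_forall_exists_segList_eq.1 hx a (w.length + 2)
  rw [← hyx, show w.length + 2 = 1 + (w.length + 1) by ring, segList_add, segList_one,
    Nat.cast_one, List.singleton_append, List.cons.injEq] at hseg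
  obtain ⟨hya, hyw⟩ := hseg
  obtain ⟨q, g, hg, hqa, haq, hblock⟩ := exists_generator_segList_of_mem_Xseq hy (a + 1)
  obtain ⟨v, rfl, hv⟩ := hc g hg
  rw [List.length_append, List.length_singleton] at haq hblock
  obtain ⟨hbody, -⟩ := List.append_inj (segList_add.symm.trans hblock) length_segList
  obtain rfl : q = a + 1 := by
    by_contra hne
    exact hv (hbody ▸ mem_segList.2 ⟨a, by omega, by push_cast at haq; omega, hya⟩)
  suffices v = w from this ▸ hg
  rcases le_total v.length w.length with hle | hle
  · exact eq_of_concat_prefix_concat hw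
      (hblock ▸ hyw ▸ segList_prefix (Nat.succ_le_succ hle))
  · exact (eq_of_concat_prefix_concat hv
      (hblock ▸ hyw ▸ segList_prefix (Nat.succ_le_succ hle))).symm

lemma mem_Xseq_of_not_bdd (hc : IsEndMarker 𝒢 c) (hx : x ∈ codedShift 𝒢)
    (habove : ¬BddAbove (x ⁻¹' {c})) (hbelow : ¬BddBelow (x ⁻¹' {c})) : x ∈ Xseq 𝒢 := by
  obtain ⟨p, hp, hrange⟩ := exists_strictMono_range_eq habove hbelow
  have hmarker (j : ℤ) : x (p j) = c := by
    have : p j ∈ x ⁻¹' {c} := hrange ▸ Set.mem_range_self j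
    simpa using this
  refine ⟨fun j => p j + 1, hp.add_const 1, fun j => ?_⟩
  have hlt : p j < p (j + 1) := hp (lt_add_one j)
  obtain ⟨n, hn⟩ := Int.le.dest (Int.add_one_le_iff.2 hlt)
  have hfree : c ∉ segList x (p j + 1) n := by
    rw [mem_segList]
    rintro ⟨k, hk, hk', hxk⟩
    refine notMem_range_of_lt_of_lt_succ hp (j := j) (k := k) (by omega) (by omega) ?_
    rw [hrange]
    exact hxk
  have hblock : segList x (p j + 1) (n + 1) = segList x (p j + 1) n ++ [c] := by
    rw [segList_add, segList_one, hn, hmarker]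
  refine ⟨segList x (p j + 1) n ++ [c], hc.concat_mem_of_return hx (a := p j) hfree ?_, ?_, ?_⟩
  · rw [length_segList, show n + 2 = 1 + (n + 1) by ring, segList_add, segList_one, hmarker,
      Nat.cast_one, hblock, List.singleton_append]
  · simp only [List.length_append, length_segList, List.length_singleton]
    push_cast
    omega
  · exact segList_length_eq_iff.1 (by simpa using hblock)

end IsEndMarker

end CodedShifts

section GapGenerators

variable {d : ℕ} (σ : Equiv.Perm (Fin d)) (s : Fin d → ℕ)

/-- The generator `gapGen d σ s` without its final letter, each letter `σ j` being recorded by its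
place `j` in the order prescribed by `σ`, so that the resulting word is sorted. -/
def gapPlaces : List (Fin d) :=
  (List.ofFn fun j : Fin d => List.replicate (s (σ j)) j).flatten

lemma gapGen_eq_map_gapPlaces_concat :
    gapGen d σ s = (gapPlaces σ s).map (Fin.castSucc ∘ σ) ++ [Fin.last d] := by
  simp [gapGen, gapPlaces, List.map_flatten, List.map_ofFn, Function.comp_def]

lemma sortedLE_gapPlaces : (gapPlaces σ s).SortedLE := by
  rw [List.sortedLE_iff_pairwise, gapPlaces, List.pairwise_flatten, List.pairwise_ofFn]
  refine ⟨?_, fun i j hij a ha b hb => ?_⟩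
  · simp only [List.mem_ofFn]
    rintro _ ⟨j, rfl⟩
    exact (List.sortedLE_replicate _).pairwise
  · rw [List.eq_of_mem_replicate ha, List.eq_of_mem_replicate hb]
    exact hij.le

lemma count_gapPlaces (j : Fin d) : (gapPlaces σ s).count j = s (σ j) := by
  simp [gapPlaces, List.count_flatten, List.map_ofFn, List.sum_ofFn, List.count_replicate]

lemma replicate_infix_gapGen (i : Fin d) :
    List.replicate (s i) (Fin.castSucc i) <:+: gapGen d σ s :=
  (List.infix_of_mem_flatten (List.mem_ofFn.2 ⟨σ.symm i, by simp⟩)).trans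
    (List.prefix_append _ _).isInfix

lemma castSucc_comp_perm_injective : (Fin.castSucc ∘ σ).Injective :=
  (Fin.castSucc_injective d).comp σ.injective

lemma isEndMarker_gapGens (S : Fin d → Set ℕ) (P : Set (Equiv.Perm (Fin d))) :
    IsEndMarker (gapGens d S P) (Fin.last d) := by
  rintro _ ⟨σ, -, s, -, rfl⟩
  exact ⟨_, gapGen_eq_map_gapPlaces_concat σ s, by simp [Fin.castSucc_ne_last]⟩

end GapGenerators

section GapShifts

variable {d : ℕ} {S : Fin d → Set ℕ} {P : Set (Equiv.Perm (Fin d))} {x : FullShift (d + 1)}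

lemma exists_sublist_map_gapPlaces (hx : x ∈ codedShift (gapGens d S P)) {a : ℤ} {n : ℕ}
    (hseg : Fin.last d ∉ segList x a n) :
    ∃ (σ : Equiv.Perm (Fin d)) (s : Fin d → ℕ), (∀ j, s j ∈ S j) ∧
      (segList x a n).Sublist ((gapPlaces σ s).map (Fin.castSucc ∘ σ)) := by
  obtain ⟨w, ⟨σ, -, s, hs, hw⟩, hinfix⟩ := (isEndMarker_gapGens S P).exists_infix hx hseg
  rw [gapGen_eq_map_gapPlaces_concat] at hw
  exact ⟨σ, s, hs, List.append_cancel_right hw ▸ hinfix.sublist⟩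

lemma eq_of_apply_eq_of_forall_ne_last (hx : x ∈ codedShift (gapGens d S P))
    (hlast : ∀ k, x k ≠ Fin.last d) {a b c : ℤ} (hab : a ≤ b) (hbc : b ≤ c) (hac : x a = x c) :
    x b = x a := by
  obtain ⟨i, rfl⟩ := Int.le.dest hab
  obtain ⟨j, rfl⟩ := Int.le.dest hbc
  have hfree : Fin.last d ∉ segList x a (i + j + 1) := by
    rw [mem_segList]
    rintro ⟨k, -, -, hk⟩
    exact hlast k hk
  obtain ⟨σ, s, -, hsub⟩ := exists_sublist_map_gapPlaces hx hfree
  simpa using getElem_eq_of_sublist_map_sorted (castSucc_comp_perm_injective σ)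
    (sortedLE_gapPlaces σ s) hsub (Nat.zero_le i) (i.le_add_right j)
    (by simp) (by simpa [add_assoc] using hac)

lemma infinite_of_constSeq_mem_codedShift {i : Fin d}
    (hx : constSeq (Fin.castSucc i) ∈ codedShift (gapGens d S P)) : (S i).Infinite := by
  refine Set.infinite_of_forall_exists_gt fun n => ?_
  have hfree : Fin.last d ∉ segList (constSeq (Fin.castSucc i)) 0 (n + 1) := by
    rw [segList_constSeq]
    exact fun h => Fin.castSucc_ne_last i (List.eq_of_mem_replicate h).symm
  obtain ⟨σ, s, hs, hsub⟩ := exists_sublist_map_gapPlaces hx hfree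
  refine ⟨s i, hs i, ?_⟩
  calc n + 1 ≤ ((gapPlaces σ s).map (Fin.castSucc ∘ σ)).count (Fin.castSucc i) := by
        rwa [← List.replicate_sublist_iff, ← segList_constSeq (a := 0)]
    _ = (gapPlaces σ s).count (σ.symm i) := by
        rw [← List.count_map_of_injective _ _ (castSucc_comp_perm_injective σ)]
        simp
    _ = s i := by rw [count_gapPlaces, Equiv.apply_symm_apply]

lemma constSeq_mem_codedShift (hS : ∀ i, (S i).Nonempty) (hP : P.Nonempty) {i : Fin d}
    (hi : (S i).Infinite) : constSeq (Fin.castSucc i) ∈ codedShift (gapGens d S P) := by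
  refine constSeq_mem_codedShift_of_replicate_infix fun n => ?_
  obtain ⟨σ, hσ⟩ := hP
  obtain ⟨m, hm, hnm⟩ := hi.exists_gt n
  choose t ht using hS
  let s := Function.update t i m
  have hs : ∀ j, s j ∈ S j := (Function.forall_update_iff t fun j r => r ∈ S j).2
    ⟨hm, fun j _ => ht j⟩
  have hrun : List.replicate n (Fin.castSucc i) <:+: List.replicate (s i) (Fin.castSucc i) := by
    rw [List.infix_replicate_iff]
    simpa [s] using hnm.le
  exact ⟨_, ⟨σ, hσ, s, hs, rfl⟩, hrun.trans (replicate_infix_gapGen σ s i)⟩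

lemma IsLetterRecurrent.exists_eq_constSeq (hrec : IsLetterRecurrent x)
    (hx : x ∈ codedShift (gapGens d S P) \ Xseq (gapGens d S P)) :
    ∃ i : Fin d, (S i).Infinite ∧ x = constSeq (Fin.castSucc i) := by
  obtain ⟨hX, hseq⟩ := hx
  have hlast (k : ℤ) : x k ≠ Fin.last d := fun hk =>
    hseq ((isEndMarker_gapGens S P).mem_Xseq_of_not_bdd hX (hk ▸ (hrec k).1) (hk ▸ (hrec k).2))
  have hconst (k : ℤ) : x k = x 0 := by
    obtain ⟨a, ha, hak⟩ := not_bddBelow_iff.1 (hrec 0).2 k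
    obtain ⟨c, hc, hkc⟩ := not_bddAbove_iff.1 (hrec 0).1 k
    exact (eq_of_apply_eq_of_forall_ne_last hX hlast hak.le hkc.le (ha.trans hc.symm)).trans ha
  obtain ⟨i, hi⟩ := Fin.exists_castSucc_eq.2 (hlast 0)
  obtain rfl : x = constSeq (Fin.castSucc i) := funext fun k => (hconst k).trans hi.symm
  exact ⟨i, infinite_of_constSeq_mem_codedShift hX, rfl⟩

end GapShifts

section Recurrence

variable {α : Type*}

lemma iterate_translate (c : ℤ) (n : ℕ) (x : ℤ → α) (k : ℤ) :
    (fun (y : ℤ → α) j => y (j + c))^[n] x k = x (k + n * c) := by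
  induction n generalizing x with
  | zero => simp
  | succ n ih =>
    rw [Function.iterate_succ_apply, ih]
    push_cast
    ring_nf

lemma ae_frequently_apply_add_mul_eq [MeasurableSpace α] [Countable α]
    [MeasurableSingletonClass α] {μ : Measure (ℤ → α)} [IsFiniteMeasure μ] {c : ℤ}
    (h : MeasurePreserving (fun (x : ℤ → α) k => x (k + c)) μ μ) :
    ∀ᵐ x ∂μ, ∀ k, ∃ᶠ n : ℕ in atTop, x (k + n * c) = x k := by
  have hmeas (k : ℤ) (a : α) : MeasurableSet {x : ℤ → α | x k = a} :=
    measurable_pi_apply (X := fun _ : ℤ => α) k (measurableSet_singleton a)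
  have hreturn : ∀ᵐ x ∂μ, ∀ k a, x k = a → ∃ᶠ n : ℕ in atTop, x (k + n * c) = a :=
    ae_all_iff.2 fun k => ae_all_iff.2 fun a => by
      simpa only [Set.mem_ofPred_eq, iterate_translate] using
        h.conservative.ae_mem_imp_frequently_image_mem (hmeas k a).nullMeasurableSet
  filter_upwards [hreturn] with x hx k
  exact hx k _ rfl

/-- The shift as a measurable equivalence: subtracting `1` from the indices moves every letter one
place to the left. -/
def shiftEquiv (d : ℕ) : FullShift d ≃ᵐ FullShift d :=
  MeasurableEquiv.arrowCongr' (Equiv.subRight 1) (MeasurableEquiv.refl _)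

variable {d : ℕ}

lemma measurable_shift : Measurable (shift d) := (shiftEquiv d).measurable

lemma ae_isLetterRecurrent {μ : Measure (FullShift d)} [IsFiniteMeasure μ]
    (h : MeasurePreserving (shift d) μ μ) : ∀ᵐ x ∂μ, IsLetterRecurrent x := by
  have hsymm : MeasurePreserving (fun (x : FullShift d) k => x (k + -1)) μ μ :=
    MeasurePreserving.symm (shiftEquiv d) h
  filter_upwards [ae_frequently_apply_add_mul_eq (c := 1) h,
    ae_frequently_apply_add_mul_eq hsymm] with x hright hleft k
  rw [not_bddAbove_iff, not_bddBelow_iff]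
  refine ⟨fun m => ?_, fun m => ?_⟩
  · obtain ⟨n, hn, hxn⟩ := frequently_atTop.1 (hright k) (m - k + 1).toNat
    exact ⟨k + n * 1, hxn, by omega⟩
  · obtain ⟨n, hn, hxn⟩ := frequently_atTop.1 (hleft k) (k - m + 1).toNat
    exact ⟨k + n * -1, hxn, by omega⟩

end Recurrence

section ErgodicDirac

variable {α : Type*} [MeasurableSpace α] {f : α → α}

lemma ergodic_dirac_of_isFixedPt (hf : Measurable f) {x : α} (hx : Function.IsFixedPt f x) :
    Ergodic f (Measure.dirac x) where
  measurable := hf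
  map_eq := by rw [Measure.map_dirac' hf, hx]
  aeconst_set s hs _ := by
    rw [eventuallyConst_set]
    by_cases h : x ∈ s
    · exact Or.inl ((ae_dirac_iff hs).2 h)
    · exact Or.inr ((ae_dirac_iff hs.compl).2 h)

lemma exists_mem_eq_dirac_of_preErgodic [MeasurableSingletonClass α] {μ : Measure α}
    [IsProbabilityMeasure μ] (hμ : PreErgodic f μ) (hf : f.Injective) {F : Set α}
    (hF : F.Countable) (hfix : F ⊆ Function.fixedPoints f) (hpos : μ F ≠ 0) :
    ∃ x ∈ F, μ = Measure.dirac x := by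
  rw [Ne, measure_null_iff_singleton hF] at hpos
  push Not at hpos
  obtain ⟨x, hx, hatom⟩ := hpos
  have hinv : f ⁻¹' {x} = {x} :=
    calc f ⁻¹' {x} = f ⁻¹' (f '' {x}) := by rw [Set.image_singleton, (hfix hx).eq]
      _ = {x} := hf.preimage_image _
  have hone : μ {x} = 1 :=
    (hμ.prob_eq_zero_or_one (measurableSet_singleton x) hinv).resolve_left hatom
  have hae : ∀ᵐ y ∂μ, y ∈ ({x} : Set α) :=
    (prob_compl_eq_zero_iff (measurableSet_singleton x)).2 hone
  refine ⟨x, hx, ?_⟩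
  rw [← Measure.restrict_eq_self_of_ae_mem hae, Measure.restrict_singleton, hone, one_smul]

end ErgodicDirac

lemma exists_eq_dirac_constSeq_of_ergodic {d : ℕ} {S : Fin d → Set ℕ} {P : Set (Equiv.Perm (Fin d))}
    {μ : Measure (FullShift (d + 1))} [IsProbabilityMeasure μ] (hμ : Ergodic (shift (d + 1)) μ)
    (hlim : μ (codedShift (gapGens d S P) \ Xseq (gapGens d S P)) ≠ 0) :
    ∃ i : Fin d, (S i).Infinite ∧ μ = Measure.dirac (constSeq (Fin.castSucc i)) := by
  let F := (fun i : Fin d => constSeq (Fin.castSucc i)) '' {i | (S i).Infinite}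
  have hlimF : (codedShift (gapGens d S P) \ Xseq (gapGens d S P) : Set _) ≤ᵐ[μ] F := by
    filter_upwards [ae_isLetterRecurrent hμ.toMeasurePreserving] with x hrec hx
    obtain ⟨i, hi, rfl⟩ := hrec.exists_eq_constSeq hx
    exact ⟨i, hi, rfl⟩
  have hfix : F ⊆ Function.fixedPoints (shift (d + 1)) := by
    rintro _ ⟨i, -, rfl⟩
    rfl
  obtain ⟨_, ⟨i, hi, rfl⟩, hdirac⟩ :=
    exists_mem_eq_dirac_of_preErgodic hμ.toPreErgodic (shiftEquiv (d + 1)).injective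
      ((Set.toFinite _).image _).countable hfix fun h => hlim (measure_mono_null_ae hlimF h)
  exact ⟨i, hi, hdirac⟩

/-- for a generalized gap shift with `I = {i : S_i infinite} ≠ ∅`,
the ergodic invariant Borel probability measures giving full measure to
`X_lim = X \ X_seq` are exactly the Dirac measures at the fixed points `i^∞`, `i ∈ I`. -/
theorem statement11 (d : ℕ) (hd : 1 ≤ d) (S : Fin d → Set ℕ) (hS : ∀ i, (S i).Nonempty)
    (P : Set (Equiv.Perm (Fin d))) (hP : P.Nonempty) (hI : ∃ i, (S i).Infinite)
    (μ : Measure (FullShift (d + 1))) :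
    (μ ∈ InvProb (codedShift (gapGens d S P)) ∧ Ergodic (shift (d + 1)) μ ∧
        μ (codedShift (gapGens d S P) \ Xseq (gapGens d S P)) = 1) ↔
      ∃ i : Fin d, (S i).Infinite ∧ μ = Measure.dirac (constSeq (Fin.castSucc i)) := by
  constructor
  · rintro ⟨⟨_, -, -⟩, herg, hlim⟩
    exact exists_eq_dirac_constSeq_of_ergodic herg (hlim ▸ one_ne_zero)
  · rintro ⟨i, hi, rfl⟩
    have hmem := constSeq_mem_codedShift hS hP hi
    have hlim := (isEndMarker_gapGens S P).constSeq_notMem_Xseq (Fin.castSucc_ne_last i)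
    have herg := ergodic_dirac_of_isFixedPt (x := constSeq (Fin.castSucc i)) measurable_shift rfl
    exact ⟨⟨inferInstance, herg.map_eq, Measure.dirac_apply_of_mem hmem⟩, herg,
      Measure.dirac_apply_of_mem ⟨hmem, hlim⟩⟩

end PaperStmt
end
end
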